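/- arXiv:1611.08768 — 3 statements merged into one kernel-verified Lean document; each statement's English description precedes it below -/
import Mathlib

section
/- Let φ be a plurisubharmonic function on an open set U ⊆ ℂⁿ, and suppose the closed Euclidean ball of radius R > 0 centered at a point a is contained in U. Then φ(a) ≤ (1/λ(B_R(a)))·∫_{B_R(a)} φ dλ, where B_R(a) is the open ball of radius R centered at a and λ is Lebesgue measure on ℂⁿ ≅ ℝ^{2n} (the integral takes values in [-∞,+∞)). In other words, every plurisubharmonic function satisfies the sub-mean-value inequality over balls, i.e. is subharmonic. -/
noncomputable section

open MeasureTheory ENNReal Metric Complex Filter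

/-! Lebesgue measure on `ℂⁿ ≅ ℝ^{2n}`, realized on `EuclideanSpace ℂ (Fin n)`. -/

instance (n : ℕ) : InnerProductSpace ℝ (EuclideanSpace ℂ (Fin n)) :=
  InnerProductSpace.complexToReal
instance (n : ℕ) : MeasurableSpace (EuclideanSpace ℂ (Fin n)) := borel _
instance (n : ℕ) : BorelSpace (EuclideanSpace ℂ (Fin n)) := ⟨rfl⟩

/-- The positive part of an extended real number, as an element of `ℝ≥0∞`. -/
def erealPos (t : EReal) : ℝ≥0∞ :=
  if t = ⊤ then ⊤ else ENNReal.ofReal t.toReal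

/-- The integral of an `EReal`-valued function: it equals `⊤` whenever the positive part
has infinite integral, and otherwise takes values in `[-∞, +∞)`, being `-∞` exactly when
the negative part has infinite integral. -/
def erealIntegral {α : Type*} [MeasurableSpace α] (μ : Measure α) (f : α → EReal) : EReal :=
  if ∫⁻ a, erealPos (f a) ∂μ = ⊤ then ⊤
  else (∫⁻ a, erealPos (f a) ∂μ).toEReal - (∫⁻ a, erealPos (-f a) ∂μ).toEReal

/-- A plurisubharmonic function on a subset `U ⊆ ℂⁿ`: an upper semicontinuous function
with values in `[-∞, +∞)` that is locally Lebesgue-integrable on `U` and satisfies the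
mean-value inequality `(φ ∘ γ)(0) ≤ (1/π) ∫_Δ (φ ∘ γ) dλ` for every holomorphic map
`γ : Δ → U` from the open unit disk `Δ ⊆ ℂ`. -/
structure PshOn {n : ℕ} (U : Set (EuclideanSpace ℂ (Fin n)))
    (φ : EuclideanSpace ℂ (Fin n) → EReal) : Prop where
  usc : UpperSemicontinuousOn φ U
  ne_top : ∀ x ∈ U, φ x ≠ ⊤
  locInt : ∀ x ∈ U, ∃ r > 0, ball x r ⊆ U ∧
    (∀ᵐ y ∂(volume.restrict (ball x r)), φ y ≠ ⊥) ∧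
    IntegrableOn (fun y => (φ y).toReal) (ball x r)
  meanValue : ∀ γ : ℂ → EuclideanSpace ℂ (Fin n),
    DifferentiableOn ℂ γ (ball 0 1) → Set.MapsTo γ (ball 0 1) U →
    φ (γ 0) ≤ ((Real.pi⁻¹ : ℝ) : EReal) *
      erealIntegral (volume.restrict (ball (0 : ℂ) 1)) (fun z => φ (γ z))

theorem erealPos_mono {s t : EReal} (h : s ≤ t) : erealPos s ≤ erealPos t := by
  unfold erealPos
  by_cases ht : t = ⊤
  · simp [ht]
  · have hs : s ≠ ⊤ := fun h' => ht (top_le_iff.1 (h' ▸ h))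
    simp only [hs, ht, if_false]
    by_cases hb : s = ⊥
    · simp [hb]
    · exact ENNReal.ofReal_le_ofReal (EReal.toReal_le_toReal h hb ht)

theorem erealIntegral_mono {α : Type*} [MeasurableSpace α] {μ : Measure α} {f g : α → EReal}
    (h : ∀ᵐ x ∂μ, f x ≤ g x) : erealIntegral μ f ≤ erealIntegral μ g := by
  have h1 : ∫⁻ a, erealPos (f a) ∂μ ≤ ∫⁻ a, erealPos (g a) ∂μ :=
    lintegral_mono_ae (h.mono fun x hx => erealPos_mono hx)
  have h2 : ∫⁻ a, erealPos (-g a) ∂μ ≤ ∫⁻ a, erealPos (-f a) ∂μ :=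
    lintegral_mono_ae (h.mono fun x hx => erealPos_mono (EReal.neg_le_neg_iff.2 hx))
  unfold erealIntegral
  by_cases hg : ∫⁻ a, erealPos (g a) ∂μ = ⊤
  · simp [hg]
  · have hf : ∫⁻ a, erealPos (f a) ∂μ ≠ ⊤ := ne_top_of_le_ne_top hg h1
    rw [if_neg hg, if_neg hf]
    exact EReal.sub_le_sub (EReal.coe_ennreal_le_coe_ennreal_iff.2 h1)
      (EReal.coe_ennreal_le_coe_ennreal_iff.2 h2)

theorem erealIntegral_coe {α : Type*} [MeasurableSpace α] {μ : Measure α} {g : α → ℝ}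
    (hg : Integrable g μ) : erealIntegral μ (fun x => (g x : EReal)) = ((∫ x, g x ∂μ : ℝ) : EReal) := by
  have e1 : ∀ x, erealPos (g x : EReal) = ENNReal.ofReal (g x) := fun x => by simp [erealPos]
  have e2 : ∀ x, erealPos (-(g x : EReal)) = ENNReal.ofReal (-g x) := fun x => by
    rw [← EReal.coe_neg]; simp [erealPos]
  have f1 : ∫⁻ a, ENNReal.ofReal (g a) ∂μ ≠ ⊤ := hg.lintegral_lt_top.ne
  have f2 : ∫⁻ a, ENNReal.ofReal (-g a) ∂μ ≠ ⊤ := hg.neg.lintegral_lt_top.ne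
  unfold erealIntegral
  simp only [e1, e2]
  rw [if_neg f1, integral_eq_lintegral_pos_part_sub_lintegral_neg_part hg, EReal.coe_sub,
    EReal.coe_ennreal_toReal f1, EReal.coe_ennreal_toReal f2]

/-- integrals of continuous functions on balls -/
theorem integrableOn_unitBall {F : Type*} [NormedAddCommGroup F] {f : ℂ → F} (hf : Continuous f) :
    IntegrableOn f (ball (0 : ℂ) 1) :=
  (hf.continuousOn.integrableOn_compact (isCompact_closedBall (0 : ℂ) 1)).mono_set
    ball_subset_closedBall

theorem integral_rotate {F : Type*} [NormedAddCommGroup F] [NormedSpace ℝ F] (c : Circle)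
    (f : ℂ → F) :
    ∫ z in ball (0 : ℂ) 1, f (c * z) = ∫ z in ball (0 : ℂ) 1, f z := by
  have h := (rotation c).measurePreserving
  have := h.setIntegral_preimage_emb (rotation c).toMeasurableEquiv.measurableEmbedding f (ball 0 1)
  have e : (rotation c) ⁻¹' ball (0 : ℂ) 1 = ball 0 1 := by
    ext z; simp only [Set.mem_preimage, mem_ball_zero_iff, LinearIsometryEquiv.norm_map]
  rw [e] at this
  simpa using this

theorem area_pow (k : ℕ) (hk : k ≠ 0) : ∫ z in ball (0 : ℂ) 1, z ^ k = 0 := by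
  have h := integral_rotate (Circle.exp (Real.pi / k)) (fun z => z ^ k)
  have e : ((Circle.exp (Real.pi / k) : Circle) : ℂ) ^ k = -1 := by
    rw [Circle.coe_exp, ← Complex.exp_nat_mul, ← Complex.exp_pi_mul_I]
    congr 1
    have : (k : ℂ) ≠ 0 := by exact_mod_cast hk
    push_cast
    field_simp
  simp only [mul_pow, e] at h
  rw [integral_const_mul] at h
  have : (2 : ℂ) * ∫ z in ball (0 : ℂ) 1, z ^ k = 0 := by linear_combination -h
  simpa using this

theorem vol_disc : (volume (ball (0 : ℂ) 1)).toReal = Real.pi := by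
  simp [Complex.volume_ball]

theorem area_poly (p : Polynomial ℂ) :
    ∫ z in ball (0 : ℂ) 1, p.eval z = Real.pi * p.eval 0 := by
  induction p using Polynomial.induction_on' with
  | add p q hp hq =>
    simp only [Polynomial.eval_add]
    rw [integral_add (integrableOn_unitBall p.continuous) (integrableOn_unitBall q.continuous),
      hp, hq]
    ring
  | monomial k c =>
    simp only [Polynomial.eval_monomial]
    rw [integral_const_mul]
    by_cases hk : k = 0
    · subst hk
      simp [Measure.real]
      ring
    · rw [area_pow k hk]; simp [hk]

theorem area_re_poly (p : Polynomial ℂ) (z0 : ℂ) (r : ℝ) :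
    ∫ z in ball (0 : ℂ) 1, (p.eval (z0 + r * z)).re = Real.pi * (p.eval z0).re := by
  have h := area_poly (p.comp (Polynomial.C z0 + Polynomial.C (r : ℂ) * Polynomial.X))
  simp only [Polynomial.eval_comp, Polynomial.eval_add, Polynomial.eval_mul, Polynomial.eval_C,
    Polynomial.eval_X, mul_zero, add_zero] at h
  have hi : IntegrableOn (fun z : ℂ => p.eval (z0 + r * z)) (ball (0 : ℂ) 1) :=
    integrableOn_unitBall (p.continuous.comp (by fun_prop))
  have := integral_re (𝕜 := ℂ) hi
  simp only [RCLike.re_eq_complex_re] at this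
  rw [this, h]
  simp

theorem area_sq_pos : 0 < ∫ z in ball (0 : ℂ) 1, ‖z‖ ^ 2 := by
  rw [setIntegral_pos_iff_support_of_nonneg_ae (ae_of_all _ fun z => by positivity)
    (integrableOn_unitBall (by fun_prop))]
  have : Function.support (fun z : ℂ => ‖z‖ ^ 2) ∩ ball (0 : ℂ) 1 = ball 0 1 \ {0} := by
    ext z; simp [and_comm]
  rw [this, measure_sdiff_null (by simp)]
  exact measure_ball_pos _ _ one_pos

theorem area_sq (z0 : ℂ) (r : ℝ) (hr : 0 < r) :
    Real.pi * ‖z0‖ ^ 2 < ∫ z in ball (0 : ℂ) 1, ‖z0 + r * z‖ ^ 2 := by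
  have e : ∀ z : ℂ, ‖z0 + r * z‖ ^ 2 =
      ((Polynomial.C (2 * (starRingEnd ℂ) z0) * Polynomial.X - Polynomial.C ((starRingEnd ℂ) z0 * z0)).eval
        (z0 + r * z)).re + r ^ 2 * ‖z‖ ^ 2 := by
    intro z
    rw [← Complex.normSq_eq_norm_sq, ← Complex.normSq_eq_norm_sq]
    simp [Complex.normSq_apply]
    ring
  have h := area_re_poly (Polynomial.C (2 * (starRingEnd ℂ) z0) * Polynomial.X
    - Polynomial.C ((starRingEnd ℂ) z0 * z0)) z0 r
  simp only [e]
  rw [integral_add ?_ (integrableOn_unitBall (by fun_prop)), h, integral_const_mul]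
  swap
  · exact integrableOn_unitBall (Complex.continuous_re.comp
      ((Polynomial.continuous _).comp (by fun_prop)))
  have e0 : ((Polynomial.C (2 * (starRingEnd ℂ) z0) * Polynomial.X
    - Polynomial.C ((starRingEnd ℂ) z0 * z0)).eval z0).re = ‖z0‖ ^ 2 := by
    rw [← Complex.normSq_eq_norm_sq]
    simp [Complex.normSq_apply]
    ring
  rw [e0]
  have := mul_pos (pow_pos hr 2) area_sq_pos
  linarith

/-- maximum principle -/
theorem max_principle {u : ℂ → EReal} {k : ℂ → ℝ} (hk : Continuous k)
    (hsup : ∀ z0 : ℂ, ∀ r : ℝ, 0 < r → ∫ z in ball (0 : ℂ) 1, k (z0 + r * z) < Real.pi * k z0)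
    (husc : UpperSemicontinuousOn u (closedBall 0 1))
    (htop : ∀ z ∈ closedBall (0 : ℂ) 1, u z ≠ ⊤)
    (hmean : ∀ z0 ∈ ball (0 : ℂ) 1, u z0 ≤ ((Real.pi⁻¹ : ℝ) : EReal) *
      erealIntegral (volume.restrict (ball (0 : ℂ) 1)) (fun z => u (z0 + (1 - ‖z0‖ : ℝ) * z)))
    (hbd : ∀ z ∈ sphere (0 : ℂ) 1, u z ≤ k z) : u 0 ≤ k 0 := by
  have hw : UpperSemicontinuousOn (fun z => u z + ((-k z : ℝ) : EReal)) (closedBall 0 1) := by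
    refine UpperSemicontinuousOn.add' husc ?_ ?_
    · exact (continuous_coe_real_ereal.comp hk.neg).continuousOn.upperSemicontinuousOn
    · intro z _
      exact EReal.continuousAt_add (by simp) (by simp)
  obtain ⟨z1, hz1, hmax⟩ := hw.exists_isMaxOn ⟨0, by simp⟩ (isCompact_closedBall _ _)
  have hmax' : ∀ z ∈ closedBall (0 : ℂ) 1,
      u z + ((-k z : ℝ) : EReal) ≤ u z1 + ((-k z1 : ℝ) : EReal) := fun z hz => hmax hz
  by_contra hcon
  push Not at hcon
  have h0 := hmax' 0 (by simp)
  have hu0 := htop 0 (by simp)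
  have hu1 := htop z1 hz1
  lift u 0 to ℝ using ⟨hu0, (lt_of_le_of_lt bot_le hcon).ne'⟩ with u0 hu0e
  have hb1 : u z1 ≠ ⊥ := by
    intro hb
    rw [hb] at h0
    simp only [EReal.bot_add, le_bot_iff, ← EReal.coe_add] at h0
    exact EReal.coe_ne_bot _ h0
  obtain ⟨u1, hu1e⟩ : ∃ u1 : ℝ, (u1 : EReal) = u z1 := ⟨_, EReal.coe_toReal hu1 hb1⟩
  rw [← hu1e] at h0 hmax'
  norm_cast at h0 hcon
  have hint : z1 ∈ ball (0 : ℂ) 1 := by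
    by_contra hn
    have hs : z1 ∈ sphere (0 : ℂ) 1 := by
      simp only [mem_closedBall, mem_ball, mem_sphere] at *
      exact le_antisymm hz1 (not_lt.1 hn)
    have := hbd z1 hs
    rw [← hu1e] at this
    norm_cast at this
    linarith
  have hm := hmean z1 hint
  have hr : 0 < 1 - ‖z1‖ := by simpa using hint
  have hmem : ∀ z ∈ ball (0 : ℂ) 1, z1 + (1 - ‖z1‖ : ℝ) * z ∈ closedBall (0 : ℂ) 1 := by
    intro z hz
    simp only [mem_ball_zero_iff, mem_closedBall_zero_iff] at *
    refine (norm_add_le _ _).trans ?_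
    rw [norm_mul, Complex.norm_real, Real.norm_of_nonneg hr.le]
    nlinarith
  have hci : IntegrableOn (fun z : ℂ => k (z1 + (1 - ‖z1‖ : ℝ) * z)) (ball (0 : ℂ) 1) :=
    integrableOn_unitBall (hk.comp (by fun_prop))
  have hle : erealIntegral (volume.restrict (ball (0 : ℂ) 1))
      (fun z => u (z1 + (1 - ‖z1‖ : ℝ) * z)) ≤
      erealIntegral (volume.restrict (ball (0 : ℂ) 1))
      (fun z => ((k (z1 + (1 - ‖z1‖ : ℝ) * z) + (u1 - k z1) : ℝ) : EReal)) := by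
    apply erealIntegral_mono
    filter_upwards [ae_restrict_mem measurableSet_ball] with z hz
    have := hmax' _ (hmem z hz)
    have ht := htop _ (hmem z hz)
    generalize u (z1 + (1 - ‖z1‖ : ℝ) * z) = t at *
    induction t with
    | bot => simp
    | top => exact absurd rfl ht
    | coe t =>
      norm_cast at this ⊢
      linarith
  have : IsFiniteMeasure (volume.restrict (ball (0 : ℂ) 1)) :=
    ⟨by rw [Measure.restrict_apply_univ]; exact measure_ball_lt_top⟩
  have hci2 : IntegrableOn (fun z : ℂ => k (z1 + (1 - ‖z1‖ : ℝ) * z) + (u1 - k z1))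
    (ball (0 : ℂ) 1) := hci.add (integrable_const _)
  rw [erealIntegral_coe hci2, integral_add hci (integrable_const _)] at hle
  have hm2 := hm.trans (mul_le_mul_of_nonneg_left hle (by exact_mod_cast Real.pi_pos.le |> inv_nonneg.2))
  rw [← hu1e] at hm2
  norm_cast at hm2
  have hs := hsup z1 _ hr
  rw [setIntegral_const, Measure.real, vol_disc, smul_eq_mul] at hm2
  have hpi := Real.pi_pos
  rw [inv_mul_eq_div, le_div_iff₀ hpi] at hm2
  nlinarith

theorem span_fourier_re {f : C(AddCircle (2 * Real.pi), ℂ)}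
    (hf : f ∈ Submodule.span ℂ (Set.range (fourier (T := 2 * Real.pi)))) :
    ∀ c : ℂ, ∃ p : Polynomial ℂ, ∀ x, (c * f x).re = (p.eval (AddCircle.toCircle x : ℂ)).re := by
  induction hf using Submodule.span_induction with
  | zero => exact fun c => ⟨0, by simp⟩
  | add f g _ _ hf hg =>
    intro c
    obtain ⟨p, hp⟩ := hf c
    obtain ⟨q, hq⟩ := hg c
    refine ⟨p + q, fun x => ?_⟩
    rw [ContinuousMap.add_apply, mul_add, Complex.add_re, hp, hq, Polynomial.eval_add,
      Complex.add_re]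
  | mem f hf =>
    intro c
    obtain ⟨k, rfl⟩ := hf
    obtain ⟨m, rfl | rfl⟩ := k.eq_nat_or_neg
    · refine ⟨Polynomial.C c * Polynomial.X ^ m, fun x => ?_⟩
      simp [fourier_apply, AddCircle.toCircle_nsmul, -mul_re]
    · refine ⟨Polynomial.C ((starRingEnd ℂ) c) * Polynomial.X ^ m, fun x => ?_⟩
      rw [fourier_neg, ← Complex.conj_re, map_mul, Complex.conj_conj]
      simp [fourier_apply, AddCircle.toCircle_nsmul, -mul_re]
  | smul d f _ hf =>
    intro c
    obtain ⟨p, hp⟩ := hf (c * d)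
    refine ⟨p, fun x => ?_⟩
    rw [← hp, ContinuousMap.smul_apply, smul_eq_mul, mul_assoc]

theorem exists_poly_approx {G : ℂ → ℝ} (hG : Continuous G) {ε : ℝ} (hε : 0 < ε) :
    ∃ p : Polynomial ℂ, ∀ z ∈ sphere (0 : ℂ) 1, |(p.eval z).re - G z| < ε := by
  let f : C(AddCircle (2 * Real.pi), ℂ) :=
    ⟨fun x => (G (AddCircle.toCircle x : ℂ) : ℂ), by
      have : Continuous (AddCircle.toCircle (T := 2 * Real.pi)) := AddCircle.continuous_toCircle
      fun_prop⟩
  have hT : Fact (0 < 2 * Real.pi) := ⟨Real.two_pi_pos⟩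
  have hmem : f ∈ (Submodule.span ℂ (Set.range (fourier (T := 2 * Real.pi)))).topologicalClosure := by
    rw [span_fourier_closure_eq_top]; trivial
  obtain ⟨g, hg, hd⟩ := Metric.mem_closure_iff.1 hmem ε hε
  obtain ⟨p, hp⟩ := span_fourier_re hg 1
  simp only [one_mul] at hp
  refine ⟨p, fun z hz => ?_⟩
  obtain ⟨x, hx⟩ := (AddCircle.homeomorphCircle (Real.two_pi_pos.ne')).surjective ⟨z, by simpa [Submonoid.unitSphere] using hz⟩
  have hx' : (AddCircle.toCircle x : ℂ) = z := by
    have := congrArg (fun c : Circle => (c : ℂ)) hx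
    simpa [AddCircle.homeomorphCircle_apply] using this
  have h1 := (ContinuousMap.dist_apply_le_dist (f := f) (g := g) x).trans_lt hd
  rw [dist_comm, dist_eq_norm] at h1
  have h2 := (Complex.abs_re_le_norm _).trans_lt h1
  simpa [f, hp, hx'] using h2

/-- Circle mean value inequality. -/
theorem circle_mean {u : ℂ → EReal} {G : ℂ → ℝ} (hG : Continuous G)
    (husc : UpperSemicontinuousOn u (closedBall 0 1))
    (htop : ∀ z ∈ closedBall (0 : ℂ) 1, u z ≠ ⊤)
    (hmean : ∀ z0 ∈ ball (0 : ℂ) 1, u z0 ≤ ((Real.pi⁻¹ : ℝ) : EReal) *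
      erealIntegral (volume.restrict (ball (0 : ℂ) 1)) (fun z => u (z0 + (1 - ‖z0‖ : ℝ) * z)))
    (hbd : ∀ z ∈ sphere (0 : ℂ) 1, u z ≤ G z) : u 0 ≤ (Real.circleAverage G 0 1 : ℝ) := by
  have key : ∀ ε : ℝ, 0 < ε → u 0 ≤ ((Real.circleAverage G 0 1 + 3 * ε : ℝ) : EReal) := by
    intro ε hε
    obtain ⟨p, hp⟩ := exists_poly_approx hG hε
    have hpc : Continuous fun z : ℂ => (p.eval z).re := Complex.continuous_re.comp p.continuous
    have h := max_principle (u := u) (k := fun z => (p.eval z).re + 2 * ε - ε * ‖z‖ ^ 2)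
      (by fun_prop) ?_ husc htop hmean ?_
    · refine h.trans ?_
      norm_cast
      have e1 : Real.circleAverage (fun z => (p.eval z).re) 0 1 = (p.eval 0).re := by
        have hd : DiffContOnCl ℂ (fun z => p.eval z) (ball (0 : ℂ) |1|) :=
          p.differentiable.diffContOnCl
        have h1 := hd.circleAverage
        have hci : CircleIntegrable (fun z => p.eval z) 0 1 :=
          p.continuous.continuousOn.circleIntegrable zero_le_one
        have h2 := Complex.reCLM.circleAverage_comp_comm hci
        rw [h1] at h2
        exact h2
      have e2 : Real.circleAverage (fun z => (p.eval z).re) 0 1 ≤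
          Real.circleAverage (fun z => G z + ε) 0 1 := by
        apply Real.circleAverage_mono
        · exact hpc.continuousOn.circleIntegrable zero_le_one
        · exact (hG.add continuous_const).continuousOn.circleIntegrable zero_le_one
        · intro z hz
          have := hp z (by simpa using hz)
          rw [abs_lt] at this
          linarith
      have e3 : Real.circleAverage (fun z => G z + ε) 0 1 = Real.circleAverage G 0 1 + ε := by
        have := Real.circleAverage_add (f₁ := G) (f₂ := fun _ => ε) (c := 0) (R := 1)
          (hG.continuousOn.circleIntegrable zero_le_one) (circleIntegrable_const _ _ _)
        rw [Real.circleAverage_const] at this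
        exact this
      norm_num
      linarith
    · intro z0 r hr
      have i1 : IntegrableOn (fun z : ℂ => (p.eval (z0 + r * z)).re) (ball (0 : ℂ) 1) :=
        integrableOn_unitBall (hpc.comp (by fun_prop : Continuous fun z : ℂ => z0 + r * z))
      have i2 : IntegrableOn (fun z : ℂ => 2 * ε) (ball (0 : ℂ) 1) :=
        integrableOn_unitBall (by fun_prop)
      have i3 : IntegrableOn (fun z : ℂ => ε * ‖z0 + r * z‖ ^ 2) (ball (0 : ℂ) 1) :=
        integrableOn_unitBall (by fun_prop)
      have i12 : IntegrableOn (fun z : ℂ => (p.eval (z0 + r * z)).re + 2 * ε) (ball (0 : ℂ) 1) :=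
        i1.add i2
      rw [integral_sub i12 i3, integral_add i1 i2, area_re_poly,
        setIntegral_const, Measure.real, vol_disc, smul_eq_mul, integral_const_mul]
      have := mul_lt_mul_of_pos_left (area_sq z0 r hr) hε
      linarith
    · intro z hz
      refine (hbd z hz).trans ?_
      norm_cast
      have := hp z hz
      rw [mem_sphere_zero_iff_norm] at hz
      rw [abs_lt] at this
      rw [hz]
      linarith
  have h1 := key 1 one_pos
  by_cases hb : u 0 = ⊥
  · rw [hb]; exact bot_le
  obtain ⟨u0, hu0e⟩ : ∃ u1 : ℝ, (u1 : EReal) = u 0 :=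
    ⟨_, EReal.coe_toReal (htop 0 (by simp)) hb⟩
  rw [← hu0e] at key ⊢
  norm_cast
  refine le_of_forall_pos_le_add fun ε hε => ?_
  have := key (ε / 3) (by positivity)
  norm_cast at this
  linarith

/-- Sup-convolution. -/
def supConv {X : Type*} [PseudoMetricSpace X] (S : Set X) (f : X → ℝ) (k : ℕ) (x : X) : ℝ :=
  ⨆ y : S, (f y - k * dist x y)

section supConv

variable {X : Type*} [PseudoMetricSpace X] {S : Set X} {f : X → ℝ} {C : ℝ}

theorem supConv_bdd (hC : ∀ y ∈ S, f y ≤ C) (k : ℕ) (x : X) :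
    BddAbove (Set.range fun y : S => f y - k * dist x y) := by
  refine ⟨C, ?_⟩
  rintro _ ⟨y, rfl⟩
  have := hC y y.2
  have : 0 ≤ (k : ℝ) * dist x y := by positivity
  simp only
  linarith [hC y y.2]

theorem le_supConv (hC : ∀ y ∈ S, f y ≤ C) (k : ℕ) {x : X} (hx : x ∈ S) :
    f x ≤ supConv S f k x := by
  have := le_ciSup (supConv_bdd hC k x) ⟨x, hx⟩
  simp only [dist_self, mul_zero, sub_zero] at this
  exact this

theorem supConv_le (hS : S.Nonempty) (hC : ∀ y ∈ S, f y ≤ C) (k : ℕ) (x : X) :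
    supConv S f k x ≤ C := by
  have := hS.to_subtype
  refine ciSup_le fun y => ?_
  have : 0 ≤ (k : ℝ) * dist x y := by positivity
  linarith [hC y y.2]

theorem supConv_continuous (hS : S.Nonempty) (hC : ∀ y ∈ S, f y ≤ C) (k : ℕ) :
    Continuous (supConv S f k) := by
  have := hS.to_subtype
  refine (LipschitzWith.of_le_add_mul (k : NNReal) fun x y => ?_).continuous
  refine ciSup_le fun w => ?_
  have h := le_ciSup (supConv_bdd hC k y) w
  have h2 := mul_le_mul_of_nonneg_left (dist_triangle_left y w x) (Nat.cast_nonneg (α := ℝ) k)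
  simp only [NNReal.coe_natCast]
  unfold supConv
  linarith

theorem supConv_tendsto (hC : ∀ y ∈ S, f y ≤ C) {x : X} (hx : x ∈ S)
    (husc : ∀ ε : ℝ, 0 < ε → ∀ᶠ y in nhdsWithin x S, f y < f x + ε) :
    Tendsto (fun k => supConv S f k x) atTop (nhds (f x)) := by
  have : Nonempty S := ⟨⟨x, hx⟩⟩
  rw [Metric.tendsto_atTop]
  intro ε hε
  obtain ⟨δ, hδ, hb⟩ := Metric.mem_nhdsWithin_iff.1 (husc (ε / 2) (by positivity))
  obtain ⟨N, hN⟩ := exists_nat_ge ((C - f x) / δ)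
  refine ⟨N, fun k hk => ?_⟩
  have h1 := le_supConv hC k hx
  have h2 : supConv S f k x ≤ f x + ε / 2 := by
    refine ciSup_le fun y => ?_
    by_cases hy : dist (y : X) x < δ
    · have := hb ⟨hy, y.2⟩
      have h0 : 0 ≤ (k : ℝ) * dist x y := by positivity
      change f y < f x + ε / 2 at this
      linarith
    · push Not at hy
      rw [dist_comm] at hy
      have hkN : (C - f x) / δ ≤ k := hN.trans (by exact_mod_cast hk)
      rw [div_le_iff₀ hδ] at hkN
      have := mul_le_mul_of_nonneg_left hy (Nat.cast_nonneg (α := ℝ) k)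
      linarith [hC y y.2]
  rw [Real.dist_eq, abs_lt]
  constructor <;> linarith

end supConv

theorem ball_rotate {n : ℕ} (g : EuclideanSpace ℂ (Fin n) → ℝ) (a : EuclideanSpace ℂ (Fin n))
    (R : ℝ) (c : ℂ) (hc : ‖c‖ = 1) :
    ∫ v in ball (0 : EuclideanSpace ℂ (Fin n)) R, g (a + c • v) = ∫ v in ball a R, g v := by
  have hc0 : c ≠ 0 := by rintro rfl; simp at hc
  let e : EuclideanSpace ℂ (Fin n) ≃ₗᵢ[ℝ] EuclideanSpace ℂ (Fin n) :=
    { (LinearEquiv.smulOfNeZero ℂ (EuclideanSpace ℂ (Fin n)) c hc0).restrictScalars ℝ with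
      norm_map' := fun v => by
        change ‖c • v‖ = ‖v‖
        rw [norm_smul, hc, one_mul] }
  have he : ∀ v, e v = c • v := fun v => rfl
  have h1 : MeasurePreserving (fun v => a + e v) :=
    (measurePreserving_add_left volume a).comp e.measurePreserving
  have h2 : MeasurableEmbedding (fun v => a + e v) :=
    (measurableEmbedding_addLeft a).comp e.toHomeomorph.measurableEmbedding
  have h3 := h1.setIntegral_preimage_emb h2 g (ball a R)
  have h4 : (fun v => a + e v) ⁻¹' ball a R = ball 0 R := by
    ext v
    simp [dist_eq_norm]
  rw [h4] at h3
  exact h3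

theorem ball_average {n : ℕ} {g : EuclideanSpace ℂ (Fin n) → ℝ} (hg : Continuous g)
    (a : EuclideanSpace ℂ (Fin n)) (R : ℝ) (t : ℝ)
    (h : ∀ v ∈ ball (0 : EuclideanSpace ℂ (Fin n)) R,
      t ≤ Real.circleAverage (fun z => g (a + z • v)) 0 1) :
    t * (volume (ball a R)).toReal ≤ ∫ x in ball a R, g x := by
  have hcont : Continuous (Function.uncurry
      fun (θ : ℝ) (v : EuclideanSpace ℂ (Fin n)) => g (a + circleMap 0 1 θ • v)) := by
    have := continuous_circleMap 0 1
    unfold Function.uncurry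
    fun_prop
  have hint : Integrable (Function.uncurry
      fun (θ : ℝ) (v : EuclideanSpace ℂ (Fin n)) => g (a + circleMap 0 1 θ • v))
      ((volume.restrict (Set.uIoc 0 (2 * Real.pi))).prod
        (volume.restrict (ball (0 : EuclideanSpace ℂ (Fin n)) R))) := by
    rw [Measure.prod_restrict]
    refine IntegrableOn.mono_set (hcont.continuousOn.integrableOn_compact
      (isCompact_uIcc.prod (isCompact_closedBall 0 R)))
      (Set.prod_mono Set.uIoc_subset_uIcc ball_subset_closedBall)
  have hswap := intervalIntegral_integral_swap hint
  have hrot : ∀ θ : ℝ, ∫ v in ball (0 : EuclideanSpace ℂ (Fin n)) R,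
      g (a + circleMap 0 1 θ • v) = ∫ x in ball a R, g x :=
    fun θ => ball_rotate g a R _ (by simp)
  simp only [hrot, intervalIntegral.integral_const, sub_zero, smul_eq_mul] at hswap
  have hi2 : IntegrableOn (fun v => ∫ θ in (0 : ℝ)..2 * Real.pi, g (a + circleMap 0 1 θ • v))
      (ball (0 : EuclideanSpace ℂ (Fin n)) R) := by
    have := hint.integral_prod_right
    simp only [Function.uncurry] at this
    refine this.congr (ae_of_all _ fun v => ?_)
    simp only
    rw [intervalIntegral.integral_of_le Real.two_pi_pos.le, Set.uIoc_of_le Real.two_pi_pos.le]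
  have hle : ∫ v in ball (0 : EuclideanSpace ℂ (Fin n)) R, (2 * Real.pi * t) ≤
      ∫ v in ball (0 : EuclideanSpace ℂ (Fin n)) R,
        ∫ θ in (0 : ℝ)..2 * Real.pi, g (a + circleMap 0 1 θ • v) := by
    refine setIntegral_mono_on ?_ hi2 measurableSet_ball fun v hv => ?_
    · exact integrableOn_const measure_ball_lt_top.ne
    · have := h v hv
      rw [Real.circleAverage, smul_eq_mul, inv_mul_eq_div, le_div_iff₀ Real.two_pi_pos] at this
      linarith
  rw [← hswap, setIntegral_const, Measure.real, smul_eq_mul,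
    ← Measure.addHaar_ball_center volume a R] at hle
  have := Real.pi_pos
  nlinarith

theorem psh_le_ball_cont {n : ℕ} {U : Set (EuclideanSpace ℂ (Fin n))}
    {φ : EuclideanSpace ℂ (Fin n) → EReal} (hφ : PshOn U φ)
    (a : EuclideanSpace ℂ (Fin n)) (R : ℝ) (hR : 0 < R) (hball : closedBall a R ⊆ U)
    {g : EuclideanSpace ℂ (Fin n) → ℝ} (hg : Continuous g)
    (hle : ∀ x ∈ closedBall a R, φ x ≤ g x) (t : ℝ) (ht : (t : EReal) = φ a) :
    t * (volume (ball a R)).toReal ≤ ∫ x in ball a R, g x := by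
  refine ball_average hg a R t fun v hv => ?_
  rw [mem_ball_zero_iff] at hv
  have hmem : Set.MapsTo (fun z : ℂ => a + z • v) (closedBall 0 1) (closedBall a R) := by
    intro z hz
    rw [mem_closedBall_zero_iff] at hz
    simp only [mem_closedBall, dist_self_add_left, norm_smul]
    nlinarith [norm_nonneg v, norm_nonneg z]
  have hmem' : Set.MapsTo (fun z : ℂ => a + z • v) (closedBall 0 1) U :=
    fun z hz => hball (hmem hz)
  have h := circle_mean (u := fun z : ℂ => φ (a + z • v)) (G := fun z => g (a + z • v))
    (by fun_prop) ?_ ?_ ?_ ?_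
  · simp only [zero_smul, add_zero, ← ht] at h
    exact_mod_cast h
  · exact hφ.usc.comp (by fun_prop) hmem'
  · exact fun z hz => hφ.ne_top _ (hmem' hz)
  · intro z0 hz0
    have hr : 0 < 1 - ‖z0‖ := by simpa using hz0
    have := hφ.meanValue (fun z => a + (z0 + (1 - ‖z0‖ : ℝ) * z) • v) (by fun_prop) ?_
    · simpa using this
    · intro z hz
      refine hmem' (x := z0 + (1 - ‖z0‖ : ℝ) * z) ?_
      simp only [mem_ball_zero_iff, mem_closedBall_zero_iff] at *
      refine (norm_add_le _ _).trans ?_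
      rw [norm_mul, Complex.norm_real, Real.norm_of_nonneg hr.le]
      nlinarith
  · intro z hz
    exact hle _ (hmem (sphere_subset_closedBall hz))

/-- A plurisubharmonic function on an open set `U ⊆ ℂⁿ` satisfies the
sub-mean-value inequality over every Euclidean ball whose closure is contained in `U`:
`φ(a) ≤ (1/λ(B_R(a))) ∫_{B_R(a)} φ dλ`. -/
theorem psh_subMeanValue_ball {n : ℕ} {U : Set (EuclideanSpace ℂ (Fin n))} (hU : IsOpen U)
    {φ : EuclideanSpace ℂ (Fin n) → EReal} (hφ : PshOn U φ)
    (a : EuclideanSpace ℂ (Fin n)) (R : ℝ) (hR : 0 < R) (hball : closedBall a R ⊆ U) :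
    φ a ≤ ((((volume (ball a R)).toReal)⁻¹ : ℝ) : EReal) *
      erealIntegral (volume.restrict (ball a R)) φ := by
  by_cases hbot : φ a = ⊥
  · rw [hbot]; exact bot_le
  have haK : a ∈ closedBall a R := mem_closedBall_self hR.le
  obtain ⟨t, ht⟩ : ∃ t : ℝ, (t : EReal) = φ a :=
    ⟨_, EReal.coe_toReal (hφ.ne_top a (hball haK)) hbot⟩
  have hV : 0 < (volume (ball a R)).toReal :=
    ENNReal.toReal_pos (measure_ball_pos _ _ hR).ne' measure_ball_lt_top.ne
  have hfin : IsFiniteMeasure (volume.restrict (ball a R)) :=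
    ⟨by rw [Measure.restrict_apply_univ]; exact measure_ball_lt_top⟩
  -- the integrability of `φ` on the ball
  have hloc : LocallyIntegrableOn (fun y => (φ y).toReal) (closedBall a R) := by
    intro x hx
    obtain ⟨r, hr, -, -, hi⟩ := hφ.locInt x (hball hx)
    exact ⟨ball x r, mem_nhdsWithin_of_mem_nhds (ball_mem_nhds x hr), hi⟩
  have hint : IntegrableOn (fun y => (φ y).toReal) (ball a R) :=
    (hloc.integrableOn_isCompact (isCompact_closedBall a R)).mono_set ball_subset_closedBall
  have hae : ∀ᵐ y ∂(volume.restrict (ball a R)), φ y ≠ ⊥ := by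
    rw [ae_restrict_iff' measurableSet_ball]
    have hnull : volume ({y | φ y = ⊥} ∩ closedBall a R) = 0 := by
      refine measure_null_of_locally_null _ fun x hx => ?_
      obtain ⟨r, hr, -, hb, -⟩ := hφ.locInt x (hball hx.2)
      refine ⟨_, inter_mem_nhdsWithin _ (ball_mem_nhds x hr), ?_⟩
      rw [ae_restrict_iff' measurableSet_ball] at hb
      refine measure_mono_null ?_ hb
      rintro y ⟨⟨hy, -⟩, hyr⟩ hcon
      exact hcon hyr hy
    refine measure_mono_null ?_ hnull
    intro y hy
    simp only [Set.mem_compl_iff, Set.mem_ofPred_eq, not_forall, not_not] at hy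
    obtain ⟨h1, h2⟩ := hy
    exact ⟨h2, ball_subset_closedBall h1⟩
  have hmem := ae_restrict_mem (μ := (volume : Measure (EuclideanSpace ℂ (Fin n))))
    (measurableSet_ball (x := a) (ε := R))
  -- upper bound
  have huscK : UpperSemicontinuousOn φ (closedBall a R) := hφ.usc.mono hball
  obtain ⟨m, hm, hmax⟩ := huscK.exists_isMaxOn ⟨a, haK⟩ (isCompact_closedBall a R)
  have hmax' : ∀ x ∈ closedBall a R, φ x ≤ φ m := fun x hx => hmax hx
  set S : Set (EuclideanSpace ℂ (Fin n)) := {y | y ∈ closedBall a R ∧ φ y ≠ ⊥} with hS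
  have hSne : S.Nonempty := ⟨a, haK, hbot⟩
  have hC : ∀ y ∈ S, (φ y).toReal ≤ (φ m).toReal := fun y hy =>
    EReal.toReal_le_toReal (hmax' y hy.1) hy.2 (hφ.ne_top m (hball hm))
  have hcoe : ∀ y ∈ S, (((φ y).toReal : ℝ) : EReal) = φ y := fun y hy =>
    EReal.coe_toReal (hφ.ne_top y (hball hy.1)) hy.2
  let g : ℕ → EuclideanSpace ℂ (Fin n) → ℝ := supConv S fun y => (φ y).toReal
  have hgc : ∀ k, Continuous (g k) := fun k => supConv_continuous hSne hC k
  have hstep : ∀ k, t * (volume (ball a R)).toReal ≤ ∫ x in ball a R, g k x := by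
    intro k
    refine psh_le_ball_cont hφ a R hR hball (hgc k) (fun x hx => ?_) t ht
    by_cases hxb : φ x = ⊥
    · rw [hxb]; exact bot_le
    · rw [← hcoe x ⟨hx, hxb⟩]
      exact_mod_cast le_supConv (f := fun y => (φ y).toReal) hC k ⟨hx, hxb⟩
  have hlim : Tendsto (fun k => ∫ x in ball a R, g k x) atTop
      (nhds (∫ x in ball a R, (φ x).toReal)) := by
    refine tendsto_integral_of_dominated_convergence
      (fun x => |(φ x).toReal| + |(φ m).toReal|) (fun k => (hgc k).aestronglyMeasurable)
      (hint.abs.add (integrable_const _)) (fun k => ?_) ?_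
    · filter_upwards [hae, hmem] with x hx hxb
      have hxS : x ∈ S := ⟨ball_subset_closedBall hxb, hx⟩
      have h1 : (φ x).toReal ≤ g k x := le_supConv (f := fun y => (φ y).toReal) hC k hxS
      have h2 : g k x ≤ (φ m).toReal := supConv_le hSne hC k x
      rw [Real.norm_eq_abs, abs_le]
      have := neg_abs_le (φ x).toReal
      have := le_abs_self (φ m).toReal
      have := abs_nonneg (φ m).toReal
      have := abs_nonneg (φ x).toReal
      constructor <;> linarith
    · filter_upwards [hae, hmem] with x hx hxb
      have hxS : x ∈ S := ⟨ball_subset_closedBall hxb, hx⟩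
      refine supConv_tendsto (f := fun y => (φ y).toReal) hC hxS fun ε hε => ?_
      have hlt : φ x < (((φ x).toReal + ε : ℝ) : EReal) := by
        rw [← hcoe x hxS]
        norm_cast
        simp [hε]
      have hev := (huscK x hxS.1) _ hlt
      have hev' := nhdsWithin_mono x (fun y (hy : y ∈ S) => hy.1) hev
      filter_upwards [hev', self_mem_nhdsWithin] with y hy hyS
      rw [← hcoe y hyS] at hy
      exact_mod_cast hy
  have hfinal : t * (volume (ball a R)).toReal ≤ ∫ x in ball a R, (φ x).toReal :=
    ge_of_tendsto' hlim hstep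
  have hcmp : ((∫ x in ball a R, (φ x).toReal : ℝ) : EReal) ≤
      erealIntegral (volume.restrict (ball a R)) φ := by
    rw [← erealIntegral_coe hint]
    refine erealIntegral_mono ?_
    filter_upwards [hae, hmem] with x hx hxb
    rw [hcoe x ⟨ball_subset_closedBall hxb, hx⟩]
  rw [← ht]
  refine le_trans ?_ (mul_le_mul_of_nonneg_left hcmp
    (by exact_mod_cast inv_nonneg.2 hV.le))
  norm_cast
  rw [inv_mul_eq_div, le_div_iff₀ hV]
  exact hfinal
end
end

section
/- Let U ⊆ ℂⁿ be open, let p ∈ (0,+∞) and C ≥ 0, and let (f_k) be a sequence of holomorphic functions on U with ∫_U |f_k|^p dλ ≤ C for every k. Then some subsequence of (f_k) converges uniformly on every compact subset of U to a holomorphic function f on U satisfying ∫_U |f|^p dλ ≤ C. -/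
noncomputable section

open MeasureTheory ENNReal Metric Complex Filter

theorem sm_mean (p : ℝ) (hp : 0 < p) (h : ℂ → ℂ) (hh : AnalyticOnNhd ℂ h (closedBall 0 1)) :
    ‖h 0‖ ^ p ≤ Real.circleAverage (fun z => ‖h z‖ ^ p) 0 1 := by
  rcases eq_or_ne (h 0) 0 with h0 | h0
  · rw [h0, norm_zero, Real.zero_rpow hp.ne']
    apply Real.circleAverage_nonneg_of_nonneg
    intro x hx; positivity
  · have ha : 0 < ‖h 0‖ := norm_pos_iff.2 h0
    set c : ℝ := Real.exp (1 / p) / ‖h 0‖ with hc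
    have hcp : 0 < c := by positivity
    let H : ℂ → ℂ := fun z => (c : ℂ) * h z
    have hH : AnalyticOnNhd ℂ H (closedBall 0 |1|) := by
      rw [abs_one]; exact fun z hz => analyticAt_const.mul (hh z hz)
    have hHn : ∀ z, ‖H z‖ = c * ‖h z‖ := fun z => by
      simp only [H, norm_mul, Complex.norm_real, Real.norm_eq_abs, abs_of_pos hcp]
    have hH0 : ‖H 0‖ = Real.exp (1 / p) := by rw [hHn, hc]; field_simp
    have hH0' : H 0 ≠ 0 := by rw [← norm_pos_iff, hH0]; positivity
    have J := hH.circleAverage_log_norm one_ne_zero hH0'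
    have hs : 0 ≤ ∑ᶠ u, (MeromorphicOn.divisor H (closedBall 0 |1|) u : ℝ) * Real.log (1 * ‖0 - u‖⁻¹) := by
      apply finsum_nonneg
      intro u
      by_cases hu : u ∈ closedBall (0:ℂ) |1|
      · apply mul_nonneg
        · exact_mod_cast (MeromorphicOn.AnalyticOnNhd.divisor_nonneg hH) u
        · rcases eq_or_ne u 0 with rfl | hu0
          · simp
          · apply Real.log_nonneg
            rw [one_mul, zero_sub, norm_neg]
            apply (one_le_inv₀ (norm_pos_iff.2 hu0)).2
            simpa using hu
      · rw [Function.locallyFinsuppWithin.apply_eq_zero_of_notMem _ hu]; simp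
    have key : ∀ z, Real.log ‖H z‖ ≤ (c ^ p / (Real.exp 1 * p)) * ‖h z‖ ^ p := by
      intro z
      rw [hHn]
      rcases (norm_nonneg (h z)).eq_or_lt with hz | hz
      · rw [← hz]; simp [Real.zero_rpow hp.ne']
      · have h1 := Real.log_le_sub_one_of_pos (x := (c * ‖h z‖) ^ p / Real.exp 1) (by positivity)
        rw [Real.log_div (by positivity) (by positivity), Real.log_exp,
          Real.log_rpow (by positivity)] at h1
        have h2 : p * Real.log (c * ‖h z‖) ≤ (c * ‖h z‖) ^ p / Real.exp 1 := by linarith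
        rw [Real.mul_rpow hcp.le hz.le] at h2
        calc _ = (p * Real.log (c * ‖h z‖)) / p := by field_simp
          _ ≤ (c ^ p * ‖h z‖ ^ p / Real.exp 1) / p := by gcongr
          _ = _ := by field_simp
    have hcont : ContinuousOn (fun z => ‖h z‖ ^ p) (sphere 0 1) :=
      ((hh.continuousOn.mono sphere_subset_closedBall).norm).rpow_const
        (fun _ _ => Or.inr hp.le)
    have hint : CircleIntegrable (fun z => ‖h z‖ ^ p) 0 1 :=
      hcont.circleIntegrable zero_le_one
    have M := Real.circleAverage_mono
      (f₁ := fun z => Real.log ‖H z‖) (f₂ := fun z => (c ^ p / (Real.exp 1 * p)) * ‖h z‖ ^ p)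
      (c := 0) (R := 1)
      (((hH.mono sphere_subset_closedBall).meromorphicOn).circleIntegrable_log_norm)
      (hint.const_smul (a := (c ^ p / (Real.exp 1 * p)))) (fun z _ => key z)
    have M2 : Real.circleAverage (fun z => (c ^ p / (Real.exp 1 * p)) * ‖h z‖ ^ p) 0 1
      = (c ^ p / (Real.exp 1 * p)) * Real.circleAverage (fun z => ‖h z‖ ^ p) 0 1 := 
      Real.circleAverage_fun_smul (a := c ^ p / (Real.exp 1 * p)) (f := fun z => ‖h z‖ ^ p)
    rw [M2, J, hH0, Real.log_exp] at M
    have hcpp : c ^ p = Real.exp 1 / ‖h 0‖ ^ p := by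
      rw [hc, Real.div_rpow (by positivity) ha.le, ← Real.exp_mul]
      congr 2; field_simp
    rw [hcpp] at M
    have M3 : 1 / p ≤ Real.exp 1 / ‖h 0‖ ^ p / (Real.exp 1 * p) * Real.circleAverage (fun z => ‖h z‖ ^ p) 0 1 := by linarith
    have hap : 0 < ‖h 0‖ ^ p := by positivity
    have : Real.exp 1 / ‖h 0‖ ^ p / (Real.exp 1 * p) * Real.circleAverage (fun z => ‖h z‖ ^ p) 0 1 = (Real.circleAverage (fun z => ‖h z‖ ^ p) 0 1 / ‖h 0‖ ^ p) / p := by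
      field_simp
    rw [this, div_le_div_iff_of_pos_right hp, le_div_iff₀ hap, one_mul] at M3
    exact M3

theorem sm_lmean (p : ℝ) (hp : 0 < p) (h : ℂ → ℂ) (hh : AnalyticOnNhd ℂ h (closedBall 0 1)) :
    ENNReal.ofReal (2 * Real.pi) * ENNReal.ofReal (‖h 0‖ ^ p) ≤
      ∫⁻ θ in Set.Ioc 0 (2 * Real.pi), ENNReal.ofReal (‖h (circleMap 0 1 θ)‖ ^ p) := by
  have h1 := sm_mean p hp h hh
  have hcont : ContinuousOn (fun z => ‖h z‖ ^ p) (sphere 0 1) :=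
      ((hh.continuousOn.mono sphere_subset_closedBall).norm).rpow_const
        (fun _ _ => Or.inr hp.le)
  have hint : CircleIntegrable (fun z => ‖h z‖ ^ p) 0 1 :=
      hcont.circleIntegrable zero_le_one
  have hpi := Real.two_pi_pos
  have hint2 : IntegrableOn (fun θ => ‖h (circleMap 0 1 θ)‖ ^ p) (Set.Ioc 0 (2 * Real.pi)) :=
    (intervalIntegrable_iff_integrableOn_Ioc_of_le hpi.le).1 hint
  rw [← ofReal_integral_eq_lintegral_ofReal hint2 (Eventually.of_forall fun θ => by positivity),
    ← ENNReal.ofReal_mul hpi.le]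
  apply ENNReal.ofReal_le_ofReal
  rw [Real.circleAverage_def, intervalIntegral.integral_of_le hpi.le, smul_eq_mul] at h1
  rwa [inv_mul_eq_div, le_div_iff₀ hpi, mul_comm] at h1

def rotE {n : ℕ} (θ : ℝ) : EuclideanSpace ℂ (Fin n) ≃ₗᵢ[ℝ] EuclideanSpace ℂ (Fin n) where
  toFun w := circleMap 0 1 θ • w
  invFun w := (circleMap 0 1 θ)⁻¹ • w
  left_inv w := inv_smul_smul₀ (circleMap_ne_center one_ne_zero) w
  right_inv w := smul_inv_smul₀ (circleMap_ne_center one_ne_zero) w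
  map_add' x y := smul_add _ x y
  map_smul' a x := by
    ext i
    change circleMap 0 1 θ * ((a : ℂ) * x i) = (a : ℂ) * (circleMap 0 1 θ * x i)
    ring
  norm_map' x := by
    change ‖circleMap 0 1 θ • x‖ = ‖x‖
    rw [norm_smul, norm_circleMap_zero]; simp

theorem ball_mean {n : ℕ} (p : ℝ) (hp : 0 < p) (f : EuclideanSpace ℂ (Fin n) → ℂ)
    (z : EuclideanSpace ℂ (Fin n)) (r : ℝ) (hf : DifferentiableOn ℂ f (ball z r)) :
    volume (ball (0 : EuclideanSpace ℂ (Fin n)) r) * ENNReal.ofReal (‖f z‖ ^ p) ≤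
      ∫⁻ x in ball z r, ENNReal.ofReal (‖f x‖ ^ p) := by
  classical
  let B := ball (0 : EuclideanSpace ℂ (Fin n)) r
  have hB : MeasurableSet B := measurableSet_ball
  let G : EuclideanSpace ℂ (Fin n) → ℝ≥0∞ :=
    B.indicator (fun w => ENNReal.ofReal (‖f (z + w)‖ ^ p))
  have hmap : ∀ w ∈ B, z + w ∈ ball z r := fun w hw => by
    simpa [B] using hw
  have hGm : Measurable G := by
    have : ContinuousOn (fun w => ENNReal.ofReal (‖f (z + w)‖ ^ p)) B := by
      apply ENNReal.continuous_ofReal.comp_continuousOn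
      refine ContinuousOn.rpow_const (ContinuousOn.norm ?_) (fun _ _ => Or.inr hp.le)
      exact hf.continuousOn.comp (by fun_prop) hmap
    have h2 := ContinuousOn.measurable_piecewise (g := fun _ => (0 : ℝ≥0∞)) this
      continuousOn_const hB
    change Measurable (B.indicator _)
    rw [← Set.piecewise_eq_indicator]
    exact h2
  have hGI : ∫⁻ w, G w = ∫⁻ x in ball z r, ENNReal.ofReal (‖f x‖ ^ p) := by
    rw [← lintegral_sub_right_eq_self G z, ← lintegral_indicator measurableSet_ball]
    congr 1
    ext x
    simp only [G, B, Set.indicator]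
    simp [dist_eq_norm]
  have hrot : ∀ θ : ℝ, ∫⁻ w, G (circleMap 0 1 θ • w) = ∫⁻ w, G w := fun θ =>
    (LinearIsometryEquiv.measurePreserving (rotE (n := n) θ)).lintegral_comp hGm
  have hpi := Real.two_pi_pos
  have h1 : ∫⁻ θ in Set.Ioc 0 (2 * Real.pi), ∫⁻ w, G (circleMap 0 1 θ • w)
      = ENNReal.ofReal (2 * Real.pi) * ∫⁻ w, G w := by
    simp_rw [hrot]
    rw [lintegral_const, Measure.restrict_apply_univ, Real.volume_Ioc, sub_zero, mul_comm]
  have hcm : Continuous (fun q : ℝ × EuclideanSpace ℂ (Fin n) => circleMap 0 1 q.1 • q.2) := by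
    fun_prop
  rw [lintegral_lintegral_swap (f := fun (θ : ℝ) (w : EuclideanSpace ℂ (Fin n)) =>
    G (circleMap 0 1 θ • w)) (hGm.comp hcm.measurable).aemeasurable] at h1
  have h2 : ∫⁻ w, B.indicator (fun _ => ENNReal.ofReal (2 * Real.pi) * ENNReal.ofReal (‖f z‖ ^ p)) w
      ≤ ∫⁻ w, ∫⁻ θ in Set.Ioc 0 (2 * Real.pi), G (circleMap 0 1 θ • w) := by
    apply lintegral_mono
    intro w
    by_cases hw : w ∈ B
    · rw [Set.indicator_of_mem hw]
      have hw' : ‖w‖ < r := by simpa [B] using hw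
      have hmaps : ∀ c ∈ closedBall (0:ℂ) 1, c • w ∈ B := by
        intro c hc
        have hc : ‖c‖ ≤ 1 := by simpa using hc
        have : ‖c • w‖ < r := by
          rw [norm_smul]; nlinarith [norm_nonneg w]
        simpa [B] using this
      have hO : IsOpen {c : ℂ | c • w ∈ B} := isOpen_ball.preimage (by fun_prop)
      have han : AnalyticOnNhd ℂ (fun c : ℂ => f (z + c • w)) {c : ℂ | c • w ∈ B} := by
        apply DifferentiableOn.analyticOnNhd _ hO
        exact hf.comp (by fun_prop) (fun c hc => hmap _ hc)
      have := sm_lmean p hp _ (han.mono hmaps)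
      simp only [zero_smul, add_zero] at this
      refine this.trans (le_of_eq ?_)
      congr 1
      ext θ
      simp only [G]
      rw [Set.indicator_of_mem]
      exact hmaps _ (by simp)
    · rw [Set.indicator_of_notMem hw]; exact zero_le
  rw [h1, lintegral_indicator hB, lintegral_const, Measure.restrict_apply_univ, hGI, mul_assoc] at h2
  rw [ENNReal.mul_le_mul_iff_right (by simpa using Real.pi_pos) ENNReal.ofReal_ne_top] at h2
  rwa [mul_comm]

theorem loc_bound {n : ℕ} (U : Set (EuclideanSpace ℂ (Fin n))) (hU : IsOpen U)
    (p : ℝ) (hp : 0 < p) (C : ℝ)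
    (f : ℕ → EuclideanSpace ℂ (Fin n) → ℂ)
    (hfd : ∀ k, DifferentiableOn ℂ (f k) U)
    (hfC : ∀ k, ∫⁻ x in U, ENNReal.ofReal (‖f k x‖ ^ p) ≤ ENNReal.ofReal C)
    (x : EuclideanSpace ℂ (Fin n)) (hx : x ∈ U) :
    ∃ r > 0, ∃ M : ℝ, ball x r ⊆ U ∧ ∀ k, ∀ y ∈ ball x r, ‖f k y‖ ≤ M := by
  obtain ⟨R, hR, hRU⟩ := Metric.isOpen_iff.1 hU x hx
  set v := volume (ball (0 : EuclideanSpace ℂ (Fin n)) (R / 2)) with hv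
  have hv0 : v ≠ 0 := (measure_ball_pos volume _ (half_pos hR)).ne'
  have hvt : v ≠ ⊤ := measure_ball_lt_top.ne
  refine ⟨R / 2, half_pos hR, ((ENNReal.ofReal C / v).toReal) ^ (1 / p),
    (ball_subset_ball (by linarith)).trans hRU, fun k y hy => ?_⟩
  have hyU : ball y (R / 2) ⊆ U := by
    refine (ball_subset_ball' ?_).trans hRU
    have := mem_ball.1 hy
    linarith
  have h1 := (ball_mean p hp (f k) y (R / 2) ((hfd k).mono hyU)).trans
    ((lintegral_mono_set hyU).trans (hfC k))
  have h2 : ENNReal.ofReal (‖f k y‖ ^ p) ≤ ENNReal.ofReal C / v := by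
    rw [ENNReal.le_div_iff_mul_le (Or.inl hv0) (Or.inl hvt), mul_comm]; exact h1
  have h3 : ‖f k y‖ ^ p ≤ (ENNReal.ofReal C / v).toReal :=
    (ENNReal.ofReal_le_iff_le_toReal (ENNReal.div_ne_top ENNReal.ofReal_ne_top hv0)).1 h2
  calc ‖f k y‖ = (‖f k y‖ ^ p) ^ (1 / p) := by
        rw [← Real.rpow_mul (norm_nonneg _), mul_one_div_cancel hp.ne', Real.rpow_one]
    _ ≤ _ := by gcongr

theorem lim_diff {n : ℕ} (U : Set (EuclideanSpace ℂ (Fin n))) (hU : IsOpen U)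
    (f : ℕ → EuclideanSpace ℂ (Fin n) → ℂ) (g : EuclideanSpace ℂ (Fin n) → ℂ)
    (hfd : ∀ k, DifferentiableOn ℂ (f k) U)
    (hc : ∀ K : Set (EuclideanSpace ℂ (Fin n)), K ⊆ U → IsCompact K →
        TendstoUniformlyOn f g atTop K) : DifferentiableOn ℂ g U := by
  intro x hx
  obtain ⟨R, hR, hRU⟩ := Metric.nhds_basis_closedBall.mem_iff.1 (hU.mem_nhds hx)
  have hcauchy := (hc _ hRU (isCompact_closedBall x R)).uniformCauchySeqOn
  have hr : 0 < R / 2 := half_pos hR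
  have hsub : ball x (R / 2) ⊆ U :=
    (ball_subset_closedBall.trans (closedBall_subset_closedBall (by linarith))).trans hRU
  have hd : ∀ k, ∀ y ∈ U, DifferentiableAt ℂ (f k) y := fun k y hy =>
    (hfd k y hy).differentiableAt (hU.mem_nhds hy)
  have hC' : UniformCauchySeqOn (fun k => fderiv ℂ (f k)) atTop (ball x (R / 2)) := by
    rw [Metric.uniformCauchySeqOn_iff] at hcauchy ⊢
    intro ε hε
    obtain ⟨N, hN⟩ := hcauchy (ε * R / 8) (by positivity)
    refine ⟨N, fun k hk l hl y hy => ?_⟩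
    have hyB : ball y (R / 2) ⊆ closedBall x R := by
      refine (ball_subset_ball' ?_).trans ball_subset_closedBall
      have := mem_ball.1 hy
      linarith
    have hyU := hsub hy
    rw [dist_eq_norm, ← fderiv_sub (hd k y hyU) (hd l y hyU)]
    have := Complex.norm_fderiv_le_div_of_mapsTo_ball (f := f k - f l) (c := y) (R₁ := R / 2)
      (R₂ := ε * R / 4) (((hfd k).sub (hfd l)).mono (hyB.trans hRU)) ?_ hr
    · refine this.trans_lt ?_
      have : ε * R / 4 / (R / 2) = ε / 2 := by field_simp; ring
      rw [this]; linarith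
    · intro w hw
      have h1 := hN k hk l hl w (hyB hw)
      have h2 := hN k hk l hl y (hyB (mem_ball_self hr))
      rw [dist_eq_norm] at h1 h2
      rw [mem_closedBall, dist_eq_norm]
      refine (norm_sub_le _ _).trans ?_
      simp only [Pi.sub_apply]
      linarith
  have hlim : ∀ y ∈ ball x (R / 2), ∃ L, Tendsto (fun k => fderiv ℂ (f k) y) atTop (nhds L) :=
    fun y hy => cauchySeq_tendsto_of_complete (hC'.cauchySeq hy)
  choose! g' hg' using hlim
  have hT := hC'.tendstoUniformlyOn_of_tendsto hg'
  refine (hasFDerivAt_of_tendstoUniformlyOn isOpen_ball hT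
    (fun k y hy => (hd k y (hsub hy)).hasFDerivAt) (fun y hy => ?_)
    (mem_ball_self hr)).differentiableAt.differentiableWithinAt
  exact (hc {y} (by simpa using hsub hy) isCompact_singleton).tendsto_at rfl

theorem subseq {n : ℕ} (U : Set (EuclideanSpace ℂ (Fin n))) (hU : IsOpen U)
    (f : ℕ → EuclideanSpace ℂ (Fin n) → ℂ)
    (hfd : ∀ k, DifferentiableOn ℂ (f k) U)
    (hb : ∀ x ∈ U, ∃ r > 0, ∃ M : ℝ, ball x r ⊆ U ∧ ∀ k, ∀ y ∈ ball x r, ‖f k y‖ ≤ M) :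
    ∃ (g : EuclideanSpace ℂ (Fin n) → ℂ) (ι : ℕ → ℕ), StrictMono ι ∧
      ∀ K : Set (EuclideanSpace ℂ (Fin n)), K ⊆ U → IsCompact K →
        TendstoUniformlyOn (fun k => f (ι k)) g atTop K := by
  classical
  have : LocallyCompactSpace U := hU.locallyCompactSpace
  have : SigmaCompactSpace U := sigmaCompactSpace_of_locallyCompact_secondCountable
  let F : ℕ → C(U, ℂ) := fun k => ⟨fun x => f k x, (hfd k).continuousOn.domRestrict⟩
  have hequi : Equicontinuous (fun k => (F k : U → ℂ)) := by
    intro x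
    obtain ⟨r, hr, M, hrU, hM⟩ := hb x x.2
    refine Metric.equicontinuousAt_of_continuity_modulus (fun y : U => 2 * M / r * dist y x) ?_ _ ?_
    · have : Continuous (fun y : U => 2 * M / r * dist y x) := by fun_prop
      simpa using this.tendsto x
    · filter_upwards [ball_mem_nhds x hr] with y hy k
      rw [dist_comm]
      refine Complex.dist_le_div_mul_dist_of_mapsTo_ball (f := f k) (c := x.1) (z := y.1)
        ((hfd k).mono hrU) ?_ hy
      intro w hw
      rw [mem_closedBall, dist_eq_norm]
      refine (norm_sub_le _ _).trans ?_
      linarith [hM k w hw, hM k x (mem_ball_self hr)]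
  have hcl : IsCompact (closure (Set.range F)) := by
    refine ArzelaAscoli.isCompact_closure_of_isClosedEmbedding (𝔖 := {K : Set U | IsCompact K})
      (F := fun φ : C(U, ℂ) => (φ : U → ℂ)) (fun K hK => hK) ?_ ?_ ?_
    · have : T2Space (UniformOnFun U ℂ {K : Set U | IsCompact K}) :=
        UniformOnFun.t2Space_of_covering (Set.eq_univ_of_forall fun x =>
          Set.mem_sUnion_of_mem (Set.mem_singleton x) isCompact_singleton)
      refine ⟨ContinuousMap.isUniformEmbedding_toUniformOnFunIsCompact.isEmbedding, ?_⟩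
      exact (ContinuousMap.isUniformEmbedding_toUniformOnFunIsCompact.isUniformInducing.isComplete_range).isClosed
    · intro K hK
      apply Equicontinuous.equicontinuousOn
      intro x
      rw [Metric.equicontinuousAt_iff]
      intro ε hε
      obtain ⟨δ, hδ, h⟩ := Metric.equicontinuousAt_iff.1 (hequi x) ε hε
      refine ⟨δ, hδ, fun y hy => ?_⟩
      rintro ⟨_, k, rfl⟩
      exact h y hy k
    · intro K hK x hx
      obtain ⟨r, hr, M, hrU, hM⟩ := hb x x.2
      refine ⟨closedBall 0 M, isCompact_closedBall _ _, ?_⟩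
      rintro _ ⟨k, rfl⟩
      rw [mem_closedBall_zero_iff]
      exact hM k x (mem_ball_self hr)
  obtain ⟨φ, -, ι, hι, hlim⟩ := hcl.isSeqCompact (x := F) (fun k => subset_closure ⟨k, rfl⟩)
  refine ⟨fun x => if h : x ∈ U then φ ⟨x, h⟩ else 0, ι, hι, fun K hKU hK => ?_⟩
  have hK' : IsCompact ((↑) ⁻¹' K : Set U) := by
    rw [Topology.IsInducing.subtypeVal.isCompact_iff, Subtype.image_preimage_coe,
      Set.inter_eq_right.2 hKU]
    exact hK
  have hu := (ContinuousMap.tendsto_iff_forall_isCompact_tendstoUniformlyOn.1 hlim) _ hK'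
  rw [Metric.tendstoUniformlyOn_iff] at hu ⊢
  intro ε hε
  filter_upwards [hu ε hε] with k hk x hx
  have := hk ⟨x, hKU hx⟩ hx
  simp only [hKU hx, dif_pos]
  exact this

/-- Let `U ⊆ ℂⁿ` be open, `p ∈ (0,∞)`, `C ≥ 0`, and let `(f_k)` be a
sequence of holomorphic functions on `U` with `∫_U |f_k|^p dλ ≤ C` for every `k`. Then a
subsequence converges uniformly on every compact subset of `U` to a holomorphic function
`f` with `∫_U |f|^p dλ ≤ C`. -/
theorem montel_Lp {n : ℕ} (U : Set (EuclideanSpace ℂ (Fin n))) (hU : IsOpen U)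
    (p : ℝ) (hp : 0 < p) (C : ℝ) (hC : 0 ≤ C)
    (f : ℕ → EuclideanSpace ℂ (Fin n) → ℂ)
    (hfd : ∀ k, DifferentiableOn ℂ (f k) U)
    (hfC : ∀ k, ∫⁻ x in U, ENNReal.ofReal (‖f k x‖ ^ p) ≤ ENNReal.ofReal C) :
    ∃ (g : EuclideanSpace ℂ (Fin n) → ℂ) (ι : ℕ → ℕ), StrictMono ι ∧
      DifferentiableOn ℂ g U ∧
      (∫⁻ x in U, ENNReal.ofReal (‖g x‖ ^ p) ≤ ENNReal.ofReal C) ∧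
      ∀ K : Set (EuclideanSpace ℂ (Fin n)), K ⊆ U → IsCompact K →
        TendstoUniformlyOn (fun k => f (ι k)) g atTop K := by
  obtain ⟨g, ι, hι, hlim⟩ := subseq U hU f hfd (loc_bound U hU p hp C f hfd hfC)
  refine ⟨g, ι, hι, lim_diff U hU _ g (fun k => hfd (ι k)) hlim, ?_, hlim⟩
  have hcont : Continuous (fun c : ℂ => ENNReal.ofReal (‖c‖ ^ p)) :=
    ENNReal.continuous_ofReal.comp (continuous_norm.rpow_const (fun _ => Or.inr hp.le))
  have hm : ∀ k, AEMeasurable (fun x => ENNReal.ofReal (‖f (ι k) x‖ ^ p)) (volume.restrict U) :=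
    fun k => (hcont.comp_continuousOn (hfd (ι k)).continuousOn).aemeasurable hU.measurableSet
  calc ∫⁻ x in U, ENNReal.ofReal (‖g x‖ ^ p)
      = ∫⁻ x in U, liminf (fun k => ENNReal.ofReal (‖f (ι k) x‖ ^ p)) atTop := by
        apply setLIntegral_congr_fun hU.measurableSet
        intro x hx
        have h1 : Tendsto (fun k => f (ι k) x) atTop (nhds (g x)) :=
          (hlim {x} (by simpa using hx) isCompact_singleton).tendsto_at rfl
        exact ((hcont.tendsto _).comp h1).liminf_eq.symm
    _ ≤ liminf (fun k => ∫⁻ x in U, ENNReal.ofReal (‖f (ι k) x‖ ^ p)) atTop :=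
        lintegral_liminf_le' hm
    _ ≤ ENNReal.ofReal C := 
        liminf_le_of_frequently_le' (Frequently.of_forall fun k => hfC (ι k))
end
end

section
/- Let B ⊆ ℂⁿ be the open unit ball, let g : B → ℂ be holomorphic with |g(0)| = 1, let r ≥ 1, and let u₁, …, u_r : B → [0,+∞] be Lebesgue-measurable functions such that |g(x)|² ≤ u₁(x)·⋯·u_r(x) for almost every x ∈ B (products in [0,+∞] with the convention 0·(+∞) = 0) and ∫_B u_i dλ ≤ λ(B) for each i = 1, …, r. Then g is constant with |g| ≡ 1 on B, and u_i(x) = 1 for almost every x ∈ B, for each i = 1, …, r. -/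
noncomputable section

open MeasureTheory ENNReal Metric Complex Filter

/-- Jensen: sub-mean-value for `log ‖f‖` on the unit circle. -/
lemma fr_log_avg {f : ℂ → ℂ} (hf : AnalyticOnNhd ℂ f (closedBall 0 1)) (h0 : ‖f 0‖ = 1) :
    0 ≤ Real.circleAverage (fun z => Real.log ‖f z‖) 0 1 := by
  have hne : f 0 ≠ 0 := by intro h; simp [h] at h0
  have hf' : AnalyticOnNhd ℂ f (closedBall 0 |1|) := by simpa using hf
  have := AnalyticOnNhd.circleAverage_log_norm one_ne_zero hf' hne
  rw [this, h0, Real.log_one, add_zero]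
  apply finsum_nonneg
  intro z
  by_cases hz : z ∈ closedBall (0 : ℂ) |1|
  · apply mul_nonneg
    · have := MeromorphicOn.AnalyticOnNhd.divisor_nonneg hf' z
      exact_mod_cast this
    · simp at hz
      rcases eq_or_ne z 0 with rfl | h
      · simp
      · apply Real.log_nonneg
        have : 0 < ‖z‖ := norm_pos_iff.2 h
        simp only [zero_sub, norm_neg, one_mul]
        exact (one_le_inv₀ this).2 hz
  · have : MeromorphicOn.divisor f (closedBall 0 |1|) z = 0 :=
      Function.locallyFinsuppWithin.apply_eq_zero_of_notMem _ hz
    simp [this]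

lemma fr_pow_avg {f : ℂ → ℂ} (hf : AnalyticOnNhd ℂ f (closedBall 0 1)) (h0 : ‖f 0‖ = 1)
    {p : ℝ} (hp : 0 < p) :
    1 ≤ Real.circleAverage (fun z => ‖f z‖ ^ p) 0 1 := by
  have hne : f 0 ≠ 0 := by intro h; simp [h] at h0
  have hS : sphere (0 : ℂ) |1| ⊆ closedBall 0 1 := by simpa using sphere_subset_closedBall
  have hlog : CircleIntegrable (fun z => Real.log ‖f z‖) 0 1 :=
    MeromorphicOn.circleIntegrable_log_norm fun z hz => (hf z (hS hz)).meromorphicAt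
  have hcod : f ⁻¹' {0}ᶜ ∈ codiscreteWithin (sphere (0 : ℂ) |1|) :=
    Filter.codiscreteWithin_mono hS (hf.preimage_zero_mem_codiscreteWithin hne (by simp)
      ((convex_closedBall (0 : ℂ) 1).isConnected ⟨0, by simp⟩))
  let L : ℂ → ℝ := (fun _ => 1) + p • (fun z => Real.log ‖f z‖)
  let Lmod : ℂ → ℝ := fun z => if f z = 0 then 0 else L z
  have hLL : L =ᶠ[codiscreteWithin (sphere (0 : ℂ) |1|)] Lmod := by
    filter_upwards [hcod] with z hz
    have : f z ≠ 0 := hz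
    simp [Lmod, this]
  have hc1 : CircleIntegrable (fun _ : ℂ => (1 : ℝ)) 0 1 := circleIntegrable_const _ _ _
  have hc2 : CircleIntegrable (p • (fun z => Real.log ‖f z‖)) 0 1 := hlog.const_smul
  have hL : CircleIntegrable L 0 1 := hc1.add hc2
  have hLmod := hL.congr_codiscreteWithin hLL
  have hcont : ContinuousOn (fun z => ‖f z‖ ^ p) (sphere (0 : ℂ) |1|) := fun z hz =>
    ((hf z (hS hz)).continuousAt.norm.rpow_const (Or.inr hp.le)).continuousWithinAt
  have hP : CircleIntegrable (fun z => ‖f z‖ ^ p) 0 1 := hcont.circleIntegrable'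
  have key : Real.circleAverage Lmod 0 1 ≤ Real.circleAverage (fun z => ‖f z‖ ^ p) 0 1 := by
    apply Real.circleAverage_mono hLmod hP
    intro z _
    by_cases hz : f z = 0
    · simp [Lmod, hz, hp.ne']
    · have hpos : 0 < ‖f z‖ := norm_pos_iff.2 hz
      simp only [Lmod, hz, if_false, L, Pi.add_apply, Pi.smul_apply, smul_eq_mul]
      rw [← Real.log_rpow hpos]
      linarith [Real.log_le_sub_one_of_pos (Real.rpow_pos_of_pos hpos p)]
  rw [← Real.circleAverage_congr_codiscreteWithin hLL one_ne_zero,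
    Real.circleAverage_add hc1 hc2, Real.circleAverage_const, Real.circleAverage_smul,
    smul_eq_mul] at key
  nlinarith [fr_log_avg hf h0]

lemma fr_pow_lintegral {f : ℂ → ℂ} (hf : AnalyticOnNhd ℂ f (closedBall 0 1)) (h0 : ‖f 0‖ = 1)
    {p : ℝ} (hp : 0 < p) :
    ENNReal.ofReal (2 * Real.pi) ≤
      ∫⁻ θ in Set.Ioc 0 (2 * Real.pi), ENNReal.ofReal (‖f (circleMap 0 1 θ)‖ ^ p) := by
  have hS : sphere (0 : ℂ) |1| ⊆ closedBall 0 1 := by simpa using sphere_subset_closedBall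
  have hcont : ContinuousOn (fun z => ‖f z‖ ^ p) (sphere (0 : ℂ) |1|) := fun z hz =>
    ((hf z (hS hz)).continuousAt.norm.rpow_const (Or.inr hp.le)).continuousWithinAt
  have hP : CircleIntegrable (fun z => ‖f z‖ ^ p) 0 1 := hcont.circleIntegrable'
  have h2 := (intervalIntegrable_iff_integrableOn_Ioc_of_le Real.two_pi_pos.le).1 hP
  rw [← ofReal_integral_eq_lintegral_ofReal h2
    (Eventually.of_forall fun _ => by positivity),
    ← intervalIntegral.integral_of_le Real.two_pi_pos.le]
  apply ENNReal.ofReal_le_ofReal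
  have := fr_pow_avg hf h0 hp
  rw [Real.circleAverage_def, smul_eq_mul, inv_mul_eq_div, le_div_iff₀ Real.two_pi_pos] at this
  linarith

/-- Sub-mean-value inequality for `‖g‖ ^ p` on the unit ball. -/
lemma fr_ball {E : Type*} [NormedAddCommGroup E] [NormedSpace ℂ E] [MeasurableSpace E]
    [BorelSpace E] [SecondCountableTopology E] (μ : Measure E) [SFinite μ]
    (hrot : ∀ θ : ℝ, MeasurePreserving (fun x : E => circleMap 0 1 θ • x) μ μ)
    {g : E → ℂ} (hg : DifferentiableOn ℂ g (ball 0 1)) (hg0 : ‖g 0‖ = 1)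
    {p : ℝ} (hp : 0 < p) :
    μ (ball 0 1) ≤ ∫⁻ x in ball 0 1, ENNReal.ofReal (‖g x‖ ^ p) ∂μ := by
  have hB : MeasurableSet (ball (0 : E) 1) := isOpen_ball.measurableSet
  let h : E → ℝ≥0∞ := (ball (0 : E) 1).indicator fun x => ENNReal.ofReal (‖g x‖ ^ p)
  have hh : Measurable h := by
    have hc : ContinuousOn (fun x => ENNReal.ofReal (‖g x‖ ^ p)) (ball 0 1) :=
      ENNReal.continuous_ofReal.comp_continuousOn
        (hg.continuousOn.norm.rpow_const fun _ _ => Or.inr hp.le)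
    classical
    have : h = (ball (0 : E) 1).piecewise (fun x => ENNReal.ofReal (‖g x‖ ^ p)) (fun _ => 0) := by
      ext x; simp [h, Set.indicator, Set.piecewise]
    rw [this]
    exact hc.measurable_piecewise continuousOn_const hB
  have hjoint : Measurable (fun q : E × ℝ => h (circleMap 0 1 q.2 • q.1)) := by
    apply hh.comp
    apply Continuous.measurable
    exact ((continuous_circleMap 0 1).comp continuous_snd).smul continuous_fst
  have hpi0 : ENNReal.ofReal (2 * Real.pi) ≠ 0 := by
    simpa using Real.pi_pos
  have e1 : ∀ θ : ℝ, ∫⁻ x, h (circleMap 0 1 θ • x) ∂μ = ∫⁻ x, h x ∂μ := fun θ =>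
    (hrot θ).lintegral_comp hh
  have e2 : ∫⁻ x, (∫⁻ θ in Set.Ioc 0 (2 * Real.pi), h (circleMap 0 1 θ • x)) ∂μ
      = ENNReal.ofReal (2 * Real.pi) * ∫⁻ x, h x ∂μ := by
    rw [lintegral_lintegral_swap hjoint.aemeasurable]
    simp_rw [e1]
    simp [mul_comm]
  have e3 : ENNReal.ofReal (2 * Real.pi) * μ (ball 0 1) ≤
      ∫⁻ x, (∫⁻ θ in Set.Ioc 0 (2 * Real.pi), h (circleMap 0 1 θ • x)) ∂μ := by
    rw [← setLIntegral_const]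
    refine le_trans ?_ (setLIntegral_le_lintegral (ball 0 1) _)
    refine setLIntegral_mono' hB fun x hx => ?_
    have hx1 : ‖x‖ < 1 := by simpa using hx
    have hmem : ∀ z ∈ closedBall (0 : ℂ) 1, z • x ∈ ball (0 : E) 1 := by
      intro z hz
      simp at hz
      simp only [mem_ball_zero_iff, norm_smul]
      nlinarith [norm_nonneg x, norm_nonneg z]
    have hana : AnalyticOnNhd ℂ (fun z : ℂ => g (z • x)) (closedBall 0 1) := by
      have ho : IsOpen ((fun z : ℂ => z • x) ⁻¹' ball 0 1) :=
        isOpen_ball.preimage (by fun_prop)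
      have hd : DifferentiableOn ℂ (fun z : ℂ => g (z • x)) ((fun z : ℂ => z • x) ⁻¹' ball 0 1) :=
        hg.comp (by fun_prop) (fun z hz => hz)
      exact (hd.analyticOnNhd ho).mono hmem
    refine (fr_pow_lintegral hana (by simpa using hg0) hp).trans (le_of_eq ?_)
    refine lintegral_congr fun θ => ?_
    have : circleMap 0 1 θ • x ∈ ball (0 : E) 1 := hmem _ (by simp)
    simp [h, Set.indicator_of_mem this]
  rw [e2] at e3
  have := (ENNReal.mul_le_mul_iff_right hpi0 ENNReal.ofReal_ne_top).1 e3
  rwa [lintegral_indicator hB] at this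

/-- Equality case of AM-GM in the needed form. -/
lemma fr_amgm {r : ℕ} {v : Fin r → ℝ} (hv : ∀ i, 0 ≤ v i) (hprod : 1 ≤ ∏ i, v i)
    (hsum : ∑ i, v i ≤ r) (i : Fin r) : v i = 1 := by
  have hpos : ∀ i, 0 < v i := fun i => (hv i).lt_of_ne fun h => by
    rw [Finset.prod_eq_zero (Finset.mem_univ i) h.symm] at hprod
    linarith
  have h1 : 0 ≤ ∑ i, Real.log (v i) := by
    rw [← Real.log_prod (fun i _ => (hpos i).ne')]
    exact Real.log_nonneg hprod
  have h2 : ∀ j ∈ Finset.univ, 0 ≤ v j - 1 - Real.log (v j) := fun j _ => by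
    linarith [Real.log_le_sub_one_of_pos (hpos j)]
  have h3 : ∑ j, (v j - 1 - Real.log (v j)) = 0 := by
    apply le_antisymm _ (Finset.sum_nonneg h2)
    simp only [Finset.sum_sub_distrib]
    simp
    linarith
  have h4 := (Finset.sum_eq_zero_iff_of_nonneg h2).1 h3 i (Finset.mem_univ i)
  by_contra hne
  linarith [Real.log_lt_sub_one_of_pos (hpos i) hne]

/-- The abstract version. -/
lemma fr_main {E : Type*} [NormedAddCommGroup E] [NormedSpace ℂ E] [MeasurableSpace E]
    [BorelSpace E] [SecondCountableTopology E] (μ : Measure E) [SFinite μ]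
    [μ.IsOpenPosMeasure] (hfin : μ (ball 0 1) ≠ ∞)
    (hrot : ∀ θ : ℝ, MeasurePreserving (fun x : E => circleMap 0 1 θ • x) μ μ)
    {r : ℕ} (hr : 1 ≤ r)
    {g : E → ℂ} (hg : DifferentiableOn ℂ g (ball 0 1)) (hg0 : ‖g 0‖ = 1)
    (u : Fin r → E → ℝ≥0∞)
    (hu_meas : ∀ i, AEMeasurable (u i) (μ.restrict (ball 0 1)))
    (hbound : ∀ᵐ x ∂(μ.restrict (ball 0 1)), ENNReal.ofReal (‖g x‖ ^ 2) ≤ ∏ i, u i x)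
    (hint : ∀ i, ∫⁻ x in ball 0 1, u i x ∂μ ≤ μ (ball 0 1)) :
    (∀ x ∈ ball (0 : E) 1, g x = g 0) ∧
    ∀ i, ∀ᵐ x ∂(μ.restrict (ball 0 1)), u i x = 1 := by
  have hB : MeasurableSet (ball (0 : E) 1) := isOpen_ball.measurableSet
  have hr0 : (0 : ℝ) < r := by exact_mod_cast hr
  have hr0' : (r : ℝ≥0∞) ≠ 0 := by simp; omega
  set ν := μ.restrict (ball (0 : E) 1) with hν
  have hν1 : ∫⁻ x, 1 ∂ν = μ (ball 0 1) := by simp [hν]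
  have hfinu : ∀ᵐ x ∂ν, ∀ i, u i x < ∞ := by
    rw [ae_all_iff]
    intro i
    exact ae_lt_top' (hu_meas i) ((hint i).trans_lt hfin.lt_top).ne
  have hsum_int : ∫⁻ x, ∑ i, u i x ∂ν ≤ r * μ (ball 0 1) := by
    rw [lintegral_finsetSum' _ fun i _ => hu_meas i]
    exact (Finset.sum_le_sum fun i _ => hint i).trans (by simp)
  have hgm : ∀ q : ℝ, 0 < q → AEMeasurable (fun x => ENNReal.ofReal (‖g x‖ ^ q)) ν := by
    intro q hq
    apply ContinuousOn.aemeasurable _ hB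
    exact ENNReal.continuous_ofReal.comp_continuousOn
        (hg.continuousOn.norm.rpow_const fun _ _ => Or.inr hq.le)
  -- pointwise AM-GM
  have hpt : ∀ᵐ x ∂ν, r * ENNReal.ofReal (‖g x‖ ^ (2 / r : ℝ)) ≤ ∑ i, u i x := by
    filter_upwards [hbound, hfinu] with x hx hf
    have hprod : ∏ i, u i x = ENNReal.ofReal (∏ i, (u i x).toReal) := by
      rw [ENNReal.ofReal_prod_of_nonneg fun _ _ => ENNReal.toReal_nonneg]
      exact Finset.prod_congr rfl fun i _ => (ENNReal.ofReal_toReal (hf i).ne).symm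
    have hsum : ∑ i, u i x = ENNReal.ofReal (∑ i, (u i x).toReal) := by
      rw [ENNReal.ofReal_sum_of_nonneg fun _ _ => ENNReal.toReal_nonneg]
      exact Finset.sum_congr rfl fun i _ => (ENNReal.ofReal_toReal (hf i).ne).symm
    rw [hprod, ENNReal.ofReal_le_ofReal_iff
      (Finset.prod_nonneg fun _ _ => ENNReal.toReal_nonneg)] at hx
    have ham := Real.geom_mean_le_arith_mean Finset.univ (fun _ => 1) (fun i => (u i x).toReal)
      (by simp) (by simpa using hr0) (fun _ _ => ENNReal.toReal_nonneg)
    simp only [Real.rpow_one, Finset.sum_const, Finset.card_univ, Fintype.card_fin, nsmul_eq_mul,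
      mul_one, one_mul] at ham
    have h1 : ‖g x‖ ^ (2 / r : ℝ) ≤ (∏ i, (u i x).toReal) ^ ((r : ℝ)⁻¹) := by
      rw [div_eq_mul_inv, Real.rpow_mul (norm_nonneg _)]
      apply Real.rpow_le_rpow (by positivity) _ (by positivity)
      simpa using hx
    rw [hsum, ← ENNReal.ofReal_natCast, ← ENNReal.ofReal_mul hr0.le]
    apply ENNReal.ofReal_le_ofReal
    have := h1.trans ham
    rw [le_div_iff₀ hr0] at this
    linarith
  have hp : (0 : ℝ) < 2 / r := by positivity
  have hp2 : (0 : ℝ) < 1 / r := by positivity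
  have hIp : ∫⁻ x, ENNReal.ofReal (‖g x‖ ^ (2 / r : ℝ)) ∂ν ≤ μ (ball 0 1) := by
    have := (lintegral_mono_ae hpt).trans hsum_int
    rw [lintegral_const_mul'' _ (hgm _ hp)] at this
    exact (ENNReal.mul_le_mul_iff_right hr0' (by simp)).1 this
  have hIh : μ (ball 0 1) ≤ ∫⁻ x, ENNReal.ofReal (‖g x‖ ^ (1 / r : ℝ)) ∂ν :=
    fr_ball μ hrot hg hg0 hp2
  have hsq : ∀ x, ‖g x‖ ^ (2 / r : ℝ) = (‖g x‖ ^ (1 / r : ℝ)) ^ 2 := by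
    intro x
    rw [← Real.rpow_natCast, ← Real.rpow_mul (norm_nonneg _)]
    congr 1
    push_cast
    ring
  have hle : ∀ x, 2 * ENNReal.ofReal (‖g x‖ ^ (1 / r : ℝ)) ≤
      ENNReal.ofReal (‖g x‖ ^ (2 / r : ℝ)) + 1 := by
    intro x
    rw [hsq, ← ENNReal.ofReal_one, ← ENNReal.ofReal_add (by positivity) (by norm_num),
      show (2 : ℝ≥0∞) = ENNReal.ofReal 2 by simp, ← ENNReal.ofReal_mul (by norm_num)]
    apply ENNReal.ofReal_le_ofReal
    nlinarith [sq_nonneg (‖g x‖ ^ (1 / r : ℝ) - 1)]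
  have hI1 : ∫⁻ x, (ENNReal.ofReal (‖g x‖ ^ (2 / r : ℝ)) + 1) ∂ν ≤ 2 * μ (ball 0 1) := by
    rw [lintegral_add_right _ measurable_const, hν1, two_mul]
    gcongr
  have hI2 : 2 * μ (ball 0 1) ≤ ∫⁻ x, 2 * ENNReal.ofReal (‖g x‖ ^ (1 / r : ℝ)) ∂ν := by
    rw [lintegral_const_mul'' _ (hgm _ hp2)]
    gcongr
  have hfin2 : 2 * μ (ball (0 : E) 1) ≠ ∞ := ENNReal.mul_ne_top (by simp) hfin
  have heq := ae_eq_of_ae_le_of_lintegral_le (Eventually.of_forall hle)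
    (((lintegral_mono hle).trans hI1).trans_lt hfin2.lt_top).ne
    ((hgm _ hp).add_const 1) (hI1.trans hI2)
  have hg1 : ∀ᵐ x ∂ν, ‖g x‖ = 1 := by
    filter_upwards [heq] with x hx
    rw [hsq, ← ENNReal.ofReal_one, ← ENNReal.ofReal_add (by positivity) (by norm_num),
      show (2 : ℝ≥0∞) = ENNReal.ofReal 2 by simp, ← ENNReal.ofReal_mul (by norm_num),
      ENNReal.ofReal_eq_ofReal_iff (by positivity) (by positivity)] at hx
    have h1 : (‖g x‖ ^ (1 / r : ℝ) - 1) ^ 2 = 0 := by linarith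
    have h2 : ‖g x‖ ^ (1 / r : ℝ) = 1 := by
      have := pow_eq_zero_iff (two_ne_zero) |>.1 h1
      linarith
    exact by
      have h3 := congrArg (fun t : ℝ => t ^ (r : ℝ)) h2
      simp only [← Real.rpow_mul (norm_nonneg (g x)), Real.one_rpow] at h3
      rwa [one_div, inv_mul_cancel₀ hr0.ne', Real.rpow_one] at h3
  refine ⟨?_, ?_⟩
  · have hE : Set.EqOn (fun x => ‖g x‖) (fun _ => 1) (ball 0 1) :=
      Measure.eqOn_open_of_ae_eq hg1 isOpen_ball hg.continuousOn.norm continuousOn_const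
    have h0 : (0 : E) ∈ ball (0 : E) 1 := by simp
    have hpre : IsPreconnected (ball (0 : E) 1) := by
      let _ : NormedSpace ℝ E := NormedSpace.restrictScalars ℝ ℂ E
      exact (convex_ball (0 : E) 1).isPreconnected
    have := Complex.eqOn_of_isPreconnected_of_isMaxOn_norm hpre isOpen_ball hg h0
      (fun x hx => by
        have a := hE hx
        have b := hE h0
        simp only at a b
        simp [a, b])
    exact fun x hx => this hx
  · have hsum_ge : ∀ᵐ x ∂ν, (r : ℝ≥0∞) ≤ ∑ i, u i x := by
      filter_upwards [hpt, hg1] with x hx h1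
      simpa [h1] using hx
    have hc : ∫⁻ _, (r : ℝ≥0∞) ∂ν = r * μ (ball 0 1) := by simp [hν]
    have hse := ae_eq_of_ae_le_of_lintegral_le hsum_ge
      (by rw [hc]; exact ENNReal.mul_ne_top (by simp) hfin)
      (Finset.aemeasurable_fun_sum _ fun i _ => hu_meas i) (by rw [hc]; exact hsum_int)
    intro i
    filter_upwards [hse, hbound, hfinu, hg1] with x hx hb hf h1
    have : (u i x).toReal = 1 := by
      refine fr_amgm (v := fun i => (u i x).toReal) (fun i => ENNReal.toReal_nonneg) ?_ ?_ i
      · rw [← ENNReal.toReal_prod]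
        have hT : ∏ i, u i x ≠ ∞ := ENNReal.prod_ne_top fun i _ => (hf i).ne
        rw [h1] at hb
        simpa using ENNReal.toReal_mono hT hb
      · rw [← ENNReal.toReal_sum fun i _ => (hf i).ne, ← hx]
        simp
    rw [← ENNReal.ofReal_toReal (hf i).ne, this, ENNReal.ofReal_one]

/-- Let `B ⊆ ℂⁿ` be the open unit ball, `g : B → ℂ` holomorphic with
`|g(0)| = 1`, `r ≥ 1`, and let `u₁, …, u_r : B → [0,+∞]` be measurable functions with
`|g|² ≤ u₁ ⋯ u_r` almost everywhere on `B` and `∫_B u_i dλ ≤ λ(B)` for each `i`. Then `g`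
is constant with `|g| ≡ 1` on `B`, and each `u_i = 1` almost everywhere on `B`. -/
theorem flatness_rigidity {n r : ℕ} (hr : 1 ≤ r)
    (g : EuclideanSpace ℂ (Fin n) → ℂ)
    (hg : DifferentiableOn ℂ g (ball 0 1)) (hg0 : ‖g 0‖ = 1)
    (u : Fin r → EuclideanSpace ℂ (Fin n) → ℝ≥0∞)
    (hu_meas : ∀ i, AEMeasurable (u i) (volume.restrict (ball 0 1)))
    (hbound : ∀ᵐ x ∂(volume.restrict (ball (0 : EuclideanSpace ℂ (Fin n)) 1)),
      ENNReal.ofReal (‖g x‖ ^ 2) ≤ ∏ i, u i x)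
    (hint : ∀ i, ∫⁻ x in ball (0 : EuclideanSpace ℂ (Fin n)) 1, u i x ≤
      volume (ball (0 : EuclideanSpace ℂ (Fin n)) 1)) :
    (∀ x ∈ ball (0 : EuclideanSpace ℂ (Fin n)) 1, g x = g 0) ∧
    ∀ i, ∀ᵐ x ∂(volume.restrict (ball (0 : EuclideanSpace ℂ (Fin n)) 1)), u i x = 1 := by
  refine fr_main volume measure_ball_lt_top.ne (fun θ => ?_) hr hg hg0 u hu_meas hbound hint
  let e : EuclideanSpace ℂ (Fin n) ≃ₗᵢ[ℝ] EuclideanSpace ℂ (Fin n) :=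
    { toFun := fun x => circleMap 0 1 θ • x
      invFun := fun x => (circleMap 0 1 θ)⁻¹ • x
      map_add' := fun x y => smul_add _ _ _
      map_smul' := fun c x => smul_comm _ _ _
      left_inv := fun x => inv_smul_smul₀ (circleMap_ne_center one_ne_zero) x
      right_inv := fun x => smul_inv_smul₀ (circleMap_ne_center one_ne_zero) x
      norm_map' := fun x => by
        change ‖circleMap 0 1 θ • x‖ = ‖x‖
        rw [norm_smul]; simp }
  exact e.measurePreserving
end
end
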